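/- Let H be a Hopf algebra over K and let (M, μ) be a left H-Hopf module algebra. Then the K-linear map P_L : M → M defined by P_L(m) = ∑ S(m₍₋₁₎) · m₍₀₎ is a Rota-Baxter operator of weight -1 on M, i.e. P_L(m)P_L(m') = P_L(m P_L(m')) + P_L(P_L(m) m') − P_L(mm') for all m, m' ∈ M. -/

import Mathlib

/-!
STATEMENT 2: If `(M, μ)` is a left `H`-Hopf module algebra over a Hopf algebra `H`,
then `P_L(m) = ∑ S(m₍₋₁₎) · m₍₀₎` is a Rota-Baxter operator of weight `-1` on `M`.
-/

open TensorProduct Coalgebra HopfAlgebra LinearMap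

theorem leftHopfModuleAlgebra_PL_isRotaBaxter_weight_neg_one
    (K : Type*) [Field K] [CharZero K]
    (H : Type*) [Ring H] [HopfAlgebra K H]
    (M : Type*) [NonUnitalRing M] [Module K M]
    [SMulCommClass K M M] [IsScalarTower K M M]
    -- left H-module structure on M
    (act : H ⊗[K] M →ₗ[K] M)
    (act_one : ∀ m : M, act ((1 : H) ⊗ₜ[K] m) = m)
    (act_mul : ∀ (h h' : H) (m : M),
      act (h ⊗ₜ[K] act (h' ⊗ₜ[K] m)) = act ((h * h') ⊗ₜ[K] m))
    -- left H-comodule structure on M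
    (δ : M →ₗ[K] H ⊗[K] M)
    (coassoc : ∀ m : M,
      (δ.lTensor H) (δ m) =
        (TensorProduct.assoc K H H M)
          (((Coalgebra.comul (R := K) (A := H)).rTensor M) (δ m)))
    (counital : ∀ m : M,
      (TensorProduct.lid K M) (((Coalgebra.counit (R := K) (A := H)).rTensor M) (δ m)) = m)
    -- Hopf module compatibility: δ(h · m) = Δ(h)δ(m)
    (hopf_compat : ∀ (h : H) (m : M),
      δ (act (h ⊗ₜ[K] m)) =
        (TensorProduct.map (LinearMap.mul' K H) act)
          ((TensorProduct.tensorTensorTensorComm K H H H M)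
            (Coalgebra.comul h ⊗ₜ[K] δ m)))
    -- h · (mm') = (h · m) m'
    (act_mul_compat : ∀ (h : H) (m m' : M),
      act (h ⊗ₜ[K] (m * m')) = act (h ⊗ₜ[K] m) * m')
    -- δ(mm') = ∑ m₍₋₁₎m'₍₋₁₎ ⊗ m₍₀₎m'₍₀₎
    (δ_mul : ∀ m m' : M,
      δ (m * m') =
        (TensorProduct.map (LinearMap.mul' K H) (LinearMap.mul' K M))
          ((TensorProduct.tensorTensorTensorComm K H M H M) (δ m ⊗ₜ[K] δ m'))) :
    -- P_L(m) = ∑ S(m₍₋₁₎) · m₍₀₎ is a Rota-Baxter operator of weight -1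
    let PL : M →ₗ[K] M := act ∘ₗ ((antipode (R := K) (A := H)).rTensor M) ∘ₗ δ
    ∀ m m' : M,
      PL m * PL m' =
        PL (m * PL m') + PL (PL m * m') + (-1 : K) • PL (m * m') := by
  intro PL
  set S := antipode K (A := H) with hS
  have PL_def : ∀ m, PL m = act (S.rTensor M (δ m)) := fun m => rfl
  have hPL : PL = act ∘ₗ S.rTensor M ∘ₗ δ := rfl
  clear_value PL
  have act_alg : ∀ (c : K) (n : M), act (algebraMap K H c ⊗ₜ[K] n) = c • n := by
    intro c n
    rw [Algebra.algebraMap_eq_smul_one, ← TensorProduct.smul_tmul', map_smul, act_one]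
  -- action of `H ⊗ H` on `H ⊗ M`
  let A2 : (H ⊗[K] H) ⊗[K] (H ⊗[K] M) →ₗ[K] H ⊗[K] M :=
    (TensorProduct.map (LinearMap.mul' K H) act) ∘ₗ
      (TensorProduct.tensorTensorTensorComm K H H H M).toLinearMap
  have A2_tmul : ∀ (a b c : H) (n : M),
      A2 ((a ⊗ₜ b) ⊗ₜ (c ⊗ₜ n)) = (a * c) ⊗ₜ act (b ⊗ₜ n) := by
    intro a b c n
    simp [A2]
  have δ_act : ∀ (h : H) (m : M), δ (act (h ⊗ₜ m)) = A2 (comul h ⊗ₜ δ m) := hopf_compat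
  clear_value A2
  have A2_mul : ∀ (x y : H ⊗[K] H) (z : H ⊗[K] M),
      A2 (x ⊗ₜ A2 (y ⊗ₜ z)) = A2 ((x * y) ⊗ₜ z) := by
    intro x y z
    induction x with
    | zero => simp
    | add x1 x2 h1 h2 => simp only [add_tmul, map_add, add_mul, h1, h2]
    | tmul a b =>
      induction y with
      | zero => simp
      | add x1 x2 h1 h2 => simp only [add_tmul, tmul_add, map_add, mul_add, h1, h2]
      | tmul c d =>
        induction z with
        | zero => simp
        | add x1 x2 h1 h2 => simp only [tmul_add, map_add, h1, h2]
        | tmul e n =>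
          simp only [A2_tmul, Algebra.TensorProduct.tmul_mul_tmul, act_mul, mul_assoc]
  have hopf1 : ∀ h : H, (LinearMap.mul' K H ∘ₗ S.lTensor H).lTensor H
      ((TensorProduct.assoc K H H H) ((comul (R := K) (A := H)).rTensor H (comul h)))
      = h ⊗ₜ 1 := by
    intro h
    rw [Coalgebra.coassoc_apply, ← LinearMap.lTensor_comp_apply, LinearMap.comp_assoc,
      hS, HopfAlgebra.mul_antipode_lTensor_comul, LinearMap.lTensor_comp_apply,
      Coalgebra.lTensor_counit_comul]
    simp
  let G : H ⊗[K] M →ₗ[K] H ⊗[K] M :=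
    A2 ∘ₗ TensorProduct.map (comul (R := K) (A := H)) (TensorProduct.mk K H M 1)
  have G_tmul : ∀ (h : H) (n : M), G (h ⊗ₜ n) = A2 (comul h ⊗ₜ (1 ⊗ₜ n)) := by
    intro h n
    simp [G]
  clear_value G
  have hB' : ∀ m, G (PL.lTensor H (δ m)) = δ m := by
    intro m
    rw [hPL, ← LinearMap.comp_assoc, LinearMap.lTensor_comp_apply, coassoc]
    generalize δ m = t
    induction t with
    | zero => simp
    | add x y hx hy => simp only [map_add, hx, hy]
    | tmul h n =>
      rw [LinearMap.rTensor_tmul]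
      have key : ∀ y : H ⊗[K] H,
          G ((act ∘ₗ S.rTensor M).lTensor H ((TensorProduct.assoc K H H M) (y ⊗ₜ n))) =
          (act ∘ₗ (TensorProduct.mk K H M).flip n).lTensor H
            ((LinearMap.mul' K H ∘ₗ S.lTensor H).lTensor H
            ((TensorProduct.assoc K H H H) ((comul (R := K) (A := H)).rTensor H y))) := by
        intro y
        induction y with
        | zero => simp
        | add x y hx hy => simp only [add_tmul, map_add, hx, hy]
        | tmul a b =>
          simp only [TensorProduct.assoc_tmul, LinearMap.lTensor_tmul, LinearMap.comp_apply,
            LinearMap.rTensor_tmul, G_tmul]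
          generalize (comul a : H ⊗[K] H) = z
          induction z with
          | zero => simp
          | add x y hx hy => simp only [add_tmul, map_add, hx, hy]
          | tmul c d => simp [A2_tmul, act_mul]
      rw [key, hopf1]
      simp [act_one]
  have hB : ∀ m, act (PL.lTensor H (δ m)) = m := by
    intro m
    have key : ∀ t : H ⊗[K] M, (TensorProduct.lid K M)
        (((Coalgebra.counit (R := K) (A := H)).rTensor M) (G t)) = act t := by
      intro t
      induction t with
      | zero => simp
      | add x y hx hy => simp only [map_add, hx, hy]
      | tmul h n =>
        rw [G_tmul]
        have : ∀ y : H ⊗[K] H, (TensorProduct.lid K M)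
          (((Coalgebra.counit (R := K) (A := H)).rTensor M) (A2 (y ⊗ₜ (1 ⊗ₜ n)))) =
            act (TensorProduct.lid K H ((Coalgebra.counit (R := K) (A := H)).rTensor H y) ⊗ₜ n) := by
          intro y
          induction y with
          | zero => simp
          | add x y hx hy => simp only [add_tmul, map_add, hx, hy]
          | tmul a b => simp [A2_tmul, ← TensorProduct.smul_tmul']
        rw [this, Coalgebra.rTensor_counit_comul]
        simp
    rw [← key, hB', counital]
  have hA : ∀ m, δ (PL m) = 1 ⊗ₜ PL m := by
    intro m
    have e1 : ∀ t : H ⊗[K] M, δ (act (S.rTensor M t)) =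
        A2 (TensorProduct.map (comul ∘ₗ S) (G ∘ₗ PL.lTensor H) (δ.lTensor H t)) := by
      intro t
      induction t with
      | zero => simp
      | add x y hx hy => simp only [map_add, hx, hy]
      | tmul h n => simp [δ_act, hB']
    have e2 : ∀ t : H ⊗[K] M,
        A2 (TensorProduct.map (comul ∘ₗ S) (G ∘ₗ PL.lTensor H)
          ((TensorProduct.assoc K H H M) ((comul (R := K) (A := H)).rTensor M t))) =
        1 ⊗ₜ PL ((TensorProduct.lid K M)
          (((Coalgebra.counit (R := K) (A := H)).rTensor M) t)) := by
      intro t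
      induction t with
      | zero => simp
      | add x y hx hy => simp only [map_add, tmul_add, hx, hy]
      | tmul h n =>
        have key : ∀ y : H ⊗[K] H,
            A2 (TensorProduct.map (comul ∘ₗ S) (G ∘ₗ PL.lTensor H)
              ((TensorProduct.assoc K H H M) (y ⊗ₜ n))) =
            A2 (comul (LinearMap.mul' K H (S.rTensor H y)) ⊗ₜ (1 ⊗ₜ PL n)) := by
          intro y
          induction y with
          | zero => simp
          | add x y hx hy => simp only [add_tmul, map_add, hx, hy]
          | tmul a b => simp [G_tmul, A2_mul]
        rw [LinearMap.rTensor_tmul, key, hS, HopfAlgebra.mul_antipode_rTensor_comul_apply,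
          Algebra.algebraMap_eq_smul_one]
        simp [← TensorProduct.smul_tmul', Algebra.TensorProduct.one_def, A2_tmul, act_one]
    rw [PL_def, e1, coassoc, e2, counital, ← PL_def]
  have hC : ∀ (h : H) (m : M), PL (act (h ⊗ₜ m)) = counit (R := K) h • PL m := by
    intro h m
    rw [PL_def, δ_act, PL_def]
    generalize δ m = t
    induction t with
    | zero => simp
    | add x y hx hy => simp only [map_add, tmul_add, smul_add, hx, hy]
    | tmul c n =>
      have key : ∀ y : H ⊗[K] H, act (S.rTensor M (A2 (y ⊗ₜ (c ⊗ₜ n)))) =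
          act (S c ⊗ₜ act (LinearMap.mul' K H (S.rTensor H y) ⊗ₜ n)) := by
        intro y
        induction y with
        | zero => simp
        | add x y hx hy => simp only [add_tmul, tmul_add, map_add, hx, hy]
        | tmul a b =>
          simp [A2_tmul, act_mul, hS, HopfAlgebra.antipode_mul_antidistrib, mul_assoc]
      rw [key, hS, HopfAlgebra.mul_antipode_rTensor_comul_apply, act_alg]
      simp
  have hD : ∀ m n : M, δ n = 1 ⊗ₜ n → PL (m * n) = PL m * n := by
    intro m n hn
    rw [PL_def, δ_mul, hn, PL_def]
    generalize δ m = t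
    induction t with
    | zero => simp
    | add x y hx hy => simp only [map_add, add_tmul, add_mul, hx, hy]
    | tmul c n => simp [act_mul_compat]
  have hE : ∀ m m' : M, PL (PL m * m') = PL (m * m') := by
    intro m m'
    have key : ∀ t : H ⊗[K] M, PL (act (PL.lTensor H t) * m') =
        PL (PL ((TensorProduct.lid K M)
          (((Coalgebra.counit (R := K) (A := H)).rTensor M) t)) * m') := by
      intro t
      induction t with
      | zero => simp
      | add x y hx hy => simp only [map_add, add_mul, hx, hy]
      | tmul h n => simp [← act_mul_compat, hC, smul_mul_assoc]
    have := key (δ m)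
    rw [hB, counital] at this
    exact this.symm
  intro m m'
  rw [hD _ _ (hA m'), hE]
  simp
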